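/- arXiv:2312.01159 — 11 statements merged into one kernel-verified Lean document; each statement's English description precedes it below -/
import Mathlib

section
/- For every 3-coloring f of the grid [2593] × [2593] (i.e., every function f from {1,...,2593} × {1,...,2593} to a set of 3 colors), there exists a monochromatic L; that is, there exist positive integers i, j, t with i + t ≤ 2593 and j + t ≤ 2593 such that f(i, j) = f(i, j + t) = f(i + t, j + t). -/
/-- Popular difference lemma. -/
lemma popular_diff (S : Finset ℕ) (hS : S ⊆ Finset.Icc 1 2593) (n k : ℕ) (hk : k + 1 ≤ S.card)
    (h : 2592 * (2 * n) < (k + 1) * k) :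
    ∃ d, 1 ≤ d ∧ n < (S.filter (fun p => p + d ∈ S)).card := by
  have hmaps : ∀ x ∈ S.offDiag, (x.1 - x.2) + (x.2 - x.1) ∈ Finset.Icc 1 2592 := by
    rintro ⟨a, b⟩ hx
    obtain ⟨ha, hb, hab⟩ := Finset.mem_offDiag.1 hx
    have h1 := Finset.mem_Icc.1 (hS ha)
    have h2 := Finset.mem_Icc.1 (hS hb)
    simp only [Finset.mem_Icc] at *
    omega
  have hcard : (Finset.Icc 1 2592).card * (2 * n) < S.offDiag.card := by
    rw [Finset.offDiag_card, Nat.card_Icc]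
    obtain ⟨m, hm⟩ := Nat.exists_eq_add_of_le hk
    rw [hm]
    have : (k + 1 + m) * (k + 1 + m) - (k + 1 + m) = (k + 1 + m) * (k + m) := by
      rw [Nat.sub_eq_iff_eq_add (by nlinarith)]; ring
    rw [this]
    nlinarith
  obtain ⟨d, hd, hlt⟩ := Finset.exists_lt_card_fiber_of_mul_lt_card_of_maps_to hmaps hcard
  refine ⟨d, (Finset.mem_Icc.1 hd).1, ?_⟩
  set B := S.filter (fun p => p + d ∈ S) with hB
  have hsub : S.offDiag.filter (fun x => (x.1 - x.2) + (x.2 - x.1) = d) ⊆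
      B.image (fun p => (p, p + d)) ∪ B.image (fun p => (p + d, p)) := by
    rintro ⟨a, b⟩ hx
    obtain ⟨hx, hxd⟩ := Finset.mem_filter.1 hx
    obtain ⟨ha, hb, hab⟩ := Finset.mem_offDiag.1 hx
    simp only at ha hb hab hxd
    rw [Finset.mem_union, Finset.mem_image, Finset.mem_image]
    rcases lt_or_gt_of_ne hab with hl | hl
    · have e : b = a + d := by omega
      left
      exact ⟨a, Finset.mem_filter.2 ⟨ha, e ▸ hb⟩, by rw [e]⟩
    · have e : a = b + d := by omega
      right
      exact ⟨b, Finset.mem_filter.2 ⟨hb, e ▸ ha⟩, by rw [e]⟩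
  have h1 := (Finset.card_le_card hsub).trans (Finset.card_union_le _ _)
  have h2 : (B.image (fun p => (p, p + d))).card ≤ B.card := Finset.card_image_le
  have h3 : (B.image (fun p => (p + d, p))).card ≤ B.card := Finset.card_image_le
  omega

/-- Theorem 2.3: every 3-coloring of the `[2593] × [2593]` grid contains a
monochromatic `L`, i.e. `R₃(L) ≤ 2593`. -/
theorem R3L_upper (f : ℕ × ℕ → Fin 3) :
    ∃ i j t : ℕ, 1 ≤ i ∧ 1 ≤ j ∧ 1 ≤ t ∧ i + t ≤ 2593 ∧ j + t ≤ 2593 ∧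
      f (i, j) = f (i, j + t) ∧ f (i, j) = f (i + t, j + t) := by
  by_contra hno
  -- no monochromatic L, in terms of endpoints
  have key : ∀ i j i' j' : ℕ, 1 ≤ i → 1 ≤ j → i < i' → i' ≤ 2593 → j' ≤ 2593 →
      i' + j = i + j' → f (i, j) = f (i', j') → f (i, j') ≠ f (i, j) := by
    intro i j i' j' hi hj hii hi' hj' he hf hg
    apply hno
    refine ⟨i, j, i' - i, hi, hj, by omega, by omega, by omega, ?_, ?_⟩
    · rw [show j + (i' - i) = j' by omega]; exact hg.symm
    · rw [show j + (i' - i) = j' by omega, show i + (i' - i) = i' by omega]; exact hf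
  obtain ⟨r, -, hr⟩ := Finset.exists_lt_card_fiber_of_mul_lt_card_of_maps_to
    (s := Finset.Icc 1 2593) (t := (Finset.univ : Finset (Fin 3))) (f := fun p => f (p, p))
    (n := 864) (fun _ _ => Finset.mem_univ _) (by simp)
  set A := (Finset.Icc 1 2593).filter (fun p => f (p, p) = r) with hA
  have memA : ∀ p ∈ A, 1 ≤ p ∧ p ≤ 2593 ∧ f (p, p) = r := by
    intro p hp
    obtain ⟨h1, h2⟩ := Finset.mem_filter.1 hp
    have := Finset.mem_Icc.1 h1
    exact ⟨this.1, this.2, h2⟩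
  have nr : ∀ p ∈ A, ∀ q ∈ A, p < q → f (p, q) ≠ r := by
    intro p hp q hq hpq
    obtain ⟨a1, a2, a3⟩ := memA p hp
    obtain ⟨b1, b2, b3⟩ := memA q hq
    have := key p p q q a1 a1 hpq b2 b2 (by omega) (by rw [a3, b3])
    rwa [a3] at this
  obtain ⟨d, hd, hB⟩ := popular_diff A (Finset.filter_subset _ _) 144 864 hr (by norm_num)
  set B := A.filter (fun p => p + d ∈ A) with hBdef
  have memB : ∀ p ∈ B, p ∈ A ∧ p + d ∈ A := fun p hp => Finset.mem_filter.1 hp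
  obtain ⟨b, hb, hC⟩ := Finset.exists_lt_card_fiber_of_mul_lt_card_of_maps_to
    (s := B) (t := (Finset.univ : Finset (Fin 3)).erase r) (f := fun p => f (p, p + d))
    (n := 72) (fun p hp => Finset.mem_erase.2
      ⟨nr p (memB p hp).1 _ (memB p hp).2 (by omega), Finset.mem_univ _⟩)
    (by rw [Finset.card_erase_of_mem (Finset.mem_univ _)]; simpa using hB)
  have hbr : b ≠ r := (Finset.mem_erase.1 hb).1
  set C := B.filter (fun p => f (p, p + d) = b) with hCdef
  have memC : ∀ p ∈ C, p ∈ A ∧ p + d ∈ A ∧ f (p, p + d) = b := by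
    intro p hp
    obtain ⟨h1, h2⟩ := Finset.mem_filter.1 hp
    exact ⟨(memB p h1).1, (memB p h1).2, h2⟩
  have nrb : ∀ p ∈ C, ∀ q ∈ C, p < q → f (p, q + d) ≠ r ∧ f (p, q + d) ≠ b := by
    intro p hp q hq hpq
    obtain ⟨a1, a2, a3⟩ := memC p hp
    obtain ⟨b1, b2, b3⟩ := memC q hq
    refine ⟨nr p a1 _ b2 (by omega), ?_⟩
    have := key p (p + d) q (q + d) (memA p a1).1 (memA _ a2).1 hpq (memA q b1).2.1
      (memA _ b2).2.1 (by omega) (by rw [a3, b3])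
    rwa [a3] at this
  have third : ∀ x y : Fin 3, x ≠ r → x ≠ b → y ≠ r → y ≠ b → x = y := by
    intro x y h1 h2 h3 h4
    omega
  obtain ⟨e, he, hD⟩ := popular_diff C
    ((Finset.filter_subset _ _).trans ((Finset.filter_subset _ _).trans (Finset.filter_subset _ _)))
    1 72 hC (by norm_num)
  have fin : ∀ p ∈ C, ∀ q ∈ C, p + e ∈ C → q + e ∈ C → p < q → False := by
    intro p hp q hq hpe hqe hpq
    have n1 := nrb p hp _ hpe (by omega)
    have n2 := nrb q hq _ hqe (by omega)
    have n3 := nrb p hp _ hqe (by omega)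
    exact key p (p + e + d) q (q + e + d) (memA p (memC p hp).1).1
      (memA _ (memC _ hpe).2.1).1 hpq (memA q (memC q hq).1).2.1 (memA _ (memC _ hqe).2.1).2.1
      (by omega) (third _ _ n1.1 n1.2 n2.1 n2.2) (third _ _ n3.1 n3.2 n1.1 n1.2)
  obtain ⟨p, hp, q, hq, hne⟩ := Finset.one_lt_card.1 hD
  obtain ⟨hp1, hp2⟩ := Finset.mem_filter.1 hp
  obtain ⟨hq1, hq2⟩ := Finset.mem_filter.1 hq
  rcases lt_or_gt_of_ne hne with h | h
  · exact fin p hp1 q hq1 hp2 hq2 h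
  · exact fin q hq1 p hp1 hq2 hp2 h
end

section
/- There exists a 3-coloring f of the grid [20] × [20] (a function from {1,...,20} × {1,...,20} to a set of 3 colors) containing no monochromatic L; that is, there are no positive integers i, j, t with i + t ≤ 20 and j + t ≤ 20 such that f(i, j) = f(i, j + t) = f(i + t, j + t). Consequently R_3(L) ≥ 21. -/
/-- Row `i` of the colouring, with the colour of `(i, j)` as the `j`-th base-4 digit. -/
def lRows : List ℕ :=
  [0,
   2225201504672,
   301060949568,
   2343006921304,
   1753982833032,
   1788417951396,
   378248783908,
   2340864267680,
   1787806452248,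
   387240706312,
   2362408457888,
   1758793640224,
   293771744648,
   2223207703128,
   1752751039012,
   298920087684,
   2235958827012,
   1676249829796,
   697463506180,
   389249657176,
   2203878262804]

/-- The colour of the point `(i, j)`, as a natural number. -/
def lColor (i j : ℕ) : ℕ := lRows.getD i 0 / 4 ^ j % 4 % 3

/-- Boolean check that the colouring has no monochromatic `L`. -/
def lCheck : Bool :=
  (List.range 20).all fun i => (List.range 20).all fun j => (List.range 20).all fun t =>
    Nat.ble i 0 || Nat.ble j 0 || Nat.ble t 0 || Nat.ble 21 (i + t) || Nat.ble 21 (j + t) ||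
      !(Nat.beq (lColor i j) (lColor i (j + t)) && Nat.beq (lColor i j) (lColor (i + t) (j + t)))

theorem lCheck_true : lCheck = true := by decide +kernel

/-- Lower-bound half of Theorem 3.1: there is a 3-coloring of the `[20] × [20]` grid
with no monochromatic `L`, hence `R₃(L) ≥ 21`. -/
theorem R3L_lower :
    ∃ f : ℕ × ℕ → Fin 3,
      ¬ ∃ i j t : ℕ, 1 ≤ i ∧ 1 ≤ j ∧ 1 ≤ t ∧ i + t ≤ 20 ∧ j + t ≤ 20 ∧
        f (i, j) = f (i, j + t) ∧ f (i, j) = f (i + t, j + t) := by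
  refine ⟨fun p => ⟨lColor p.1 p.2, Nat.mod_lt _ (by norm_num)⟩, ?_⟩
  rintro ⟨i, j, t, hi, hj, ht, hit, hjt, h1, h2⟩
  have h1' : lColor i j = lColor i (j + t) := congrArg Fin.val h1
  have h2' : lColor i j = lColor (i + t) (j + t) := congrArg Fin.val h2
  have h := lCheck_true
  unfold lCheck at h
  have h3 := List.all_eq_true.mp h i (List.mem_range.mpr (by omega))
  have h4 := List.all_eq_true.mp h3 j (List.mem_range.mpr (by omega))
  have h5 := List.all_eq_true.mp h4 t (List.mem_range.mpr (by omega))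
  rw [← h1', ← h2'] at h5
  simp only [Bool.or_eq_true, Nat.ble_eq, Nat.beq_refl, Bool.and_self, Bool.not_true,
    Bool.false_eq_true, or_false] at h5
  omega
end

section
/- For every positive integer c there exists a positive integer n with n > c such that every c-coloring f of the grid [n] × [n] (every function f from {1,...,n} × {1,...,n} to a set of c colors) contains a monochromatic L; that is, there exist positive integers i, j, t with i + t ≤ n and j + t ≤ n such that f(i, j) = f(i, j + t) = f(i + t, j + t). -/
open Combinatorics in
lemma line_sum_aux {ι : Type} [Fintype ι] (l : Line (Fin 3) ι) (p : Fin 3 → ℕ) (hp : p 0 = 0)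
    (x : Fin 3) : ∑ i, p (l x i) =
      ∑ i, p (l 0 i) + (∑ i, if l.idxFun i = none then 1 else 0) * p x := by
  rw [Finset.sum_mul, ← Finset.sum_add_distrib]
  refine Finset.sum_congr rfl fun i _ => ?_
  rw [Line.apply_def, Line.apply_def]
  cases h : l.idxFun i <;> simp [h, hp]

/-- Theorem 2.1 (the `L` Number Theorem): for every positive `c` there is an `n > c`
such that every `c`-coloring of the `[n] × [n]` grid contains a monochromatic `L`. -/
theorem L_number_theorem (c : ℕ) (hc : 1 ≤ c) :
    ∃ n : ℕ, c < n ∧ ∀ f : ℕ × ℕ → Fin c,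
      ∃ i j t : ℕ, 1 ≤ i ∧ 1 ≤ j ∧ 1 ≤ t ∧ i + t ≤ n ∧ j + t ≤ n ∧
        f (i, j) = f (i, j + t) ∧ f (i, j) = f (i + t, j + t) := by
  obtain ⟨ι, _, hι⟩ := Combinatorics.Line.exists_mono_in_high_dimension (Fin 3) (Fin c)
  refine ⟨Fintype.card ι + 1 + c, by omega, fun f => ?_⟩
  let p : Fin 3 → ℕ := ![0, 0, 1]
  let q : Fin 3 → ℕ := ![0, 1, 1]
  obtain ⟨l, k, hl⟩ := hι fun v => f (1 + ∑ i, p (v i), 1 + ∑ i, q (v i))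
  have hP := line_sum_aux l p rfl
  have hQ := line_sum_aux l q rfl
  have bP : ∑ i, p (l 2 i) ≤ Fintype.card ι := by
    have := Finset.sum_le_card_nsmul Finset.univ (fun i => p (l 2 i)) 1
      (fun i _ => (by decide : ∀ y : Fin 3, (![0, 0, 1] : Fin 3 → ℕ) y ≤ 1) _)
    simpa using this
  have bQ : ∑ i, q (l 2 i) ≤ Fintype.card ι := by
    have := Finset.sum_le_card_nsmul Finset.univ (fun i => q (l 2 i)) 1
      (fun i _ => (by decide : ∀ y : Fin 3, (![0, 1, 1] : Fin 3 → ℕ) y ≤ 1) _)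
    simpa using this
  have ht : 1 ≤ ∑ i, if l.idxFun i = none then 1 else 0 := by
    obtain ⟨i, hi⟩ := l.proper
    have := Finset.single_le_sum (f := fun i => if l.idxFun i = none then 1 else 0)
      (fun _ _ => Nat.zero_le _) (Finset.mem_univ i)
    simpa [hi] using this
  generalize (∑ i, if l.idxFun i = none then 1 else 0) = t at hP hQ ht
  have p1 : p 1 = 0 := rfl
  have p2 : p 2 = 1 := rfl
  have q1 : q 1 = 1 := rfl
  have q2 : q 2 = 1 := rfl
  have hP1 := hP 1
  have hP2 := hP 2
  have hQ1 := hQ 1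
  have hQ2 := hQ 2
  rw [p1, mul_zero, add_zero] at hP1
  rw [p2, mul_one] at hP2
  rw [q1, mul_one] at hQ1
  rw [q2, mul_one] at hQ2
  have h0 := hl 0
  have h1 := hl 1
  have h2 := hl 2
  simp only [hP1, hQ1] at h1
  simp only [hP2, hQ2] at h2
  refine ⟨1 + ∑ i, p (l 0 i), 1 + ∑ i, q (l 0 i), t, by omega, by omega, ht, by omega, by omega,
    ?_, ?_⟩
  · rw [add_assoc 1 _ t]
    exact h0.trans h1.symm
  · rw [add_assoc 1 _ t, add_assoc 1 _ t]
    exact h0.trans h2.symm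
end

section
/- For every positive integer c there exists a positive integer n with n > c such that every c-coloring f of [n] = {1,...,n} contains two integers of the same color that are a perfect square apart; that is, there exist a ∈ [n] and a positive integer d with a + d² ≤ n and f(a) = f(a + d²). -/
/-- Finitary van der Waerden theorem, from Hales-Jewett. -/
theorem vdw_finitary (κ : Type) [Finite κ] (K : ℕ) :
    ∃ M : ℕ, ∀ C : ℕ → κ, ∃ b D : ℕ, 1 ≤ D ∧ D ≤ M ∧ b + K * D ≤ M ∧
      ∀ j ≤ K, C (b + j * D) = C (b + K * D) := by
  classical
  obtain ⟨ι, _, hι⟩ := Combinatorics.Line.exists_mono_in_high_dimension (Fin (K + 1)) κ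
  refine ⟨Fintype.card ι * (K + 1), fun C => ?_⟩
  obtain ⟨l, k, hl⟩ := hι (fun v => C (∑ i, (v i : ℕ)))
  let S : Finset ι := Finset.univ.filter (fun i => l.idxFun i = none)
  have key : ∀ x : Fin (K + 1), ∑ i, (l x i : ℕ) =
      (∑ i ∈ Finset.univ.filter (fun i => ¬ l.idxFun i = none), (l 0 i : ℕ)) + x * S.card := by
    intro x
    rw [← Finset.sum_filter_add_sum_filter_not Finset.univ (fun i => l.idxFun i = none), add_comm]
    congr 1
    · apply Finset.sum_congr rfl
      intro i hi
      have h := (Finset.mem_filter.1 hi).2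
      obtain ⟨a, ha⟩ := Option.ne_none_iff_exists'.1 h
      rw [l.apply_some ha, l.apply_some ha]
    · rw [Finset.sum_congr rfl (g := fun _ => (x : ℕ))]
      · rw [Finset.sum_const, smul_eq_mul, mul_comm]
      · intro i hi
        rw [l.apply_none _ _ (Finset.mem_filter.1 hi).2]
  have hS : S.card ≤ Fintype.card ι := Finset.card_le_univ S
  refine ⟨∑ i ∈ Finset.univ.filter (fun i => ¬ l.idxFun i = none), (l 0 i : ℕ), S.card, ?_, ?_, ?_, fun j hj => ?_⟩
  · obtain ⟨i, hi⟩ := l.proper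
    exact Finset.card_pos.2 ⟨i, by simp [S, hi]⟩
  · nlinarith
  · have h := key (Fin.last K)
    rw [Fin.val_last] at h
    rw [← h]
    calc ∑ i, (l (Fin.last K) i : ℕ) ≤ ∑ i : ι, (K + 1) :=
          Finset.sum_le_sum (fun i _ => (l (Fin.last K) i).isLt.le)
      _ = _ := by simp
  · have h1 := hl ⟨j, by omega⟩
    have h2 := hl (Fin.last K)
    simp only [key] at h1 h2
    rw [Fin.val_last] at h2
    exact h1.trans h2.symm

theorem focus (c r : ℕ) : ∃ N : ℕ, ∀ f : ℕ → Fin c,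
    (∃ a d : ℕ, 1 ≤ a ∧ 1 ≤ d ∧ a + d ^ 2 ≤ N ∧ f a = f (a + d ^ 2)) ∨
    ∃ a, 1 ≤ a ∧ a ≤ N ∧ ∃ s : Finset (Fin c), s.card = r ∧
      ∀ k ∈ s, ∃ p d, 1 ≤ p ∧ 1 ≤ d ∧ p + d ^ 2 = a ∧ f p = k := by
  classical
  induction r with
  | zero => exact ⟨1, fun f => Or.inr ⟨1, le_rfl, le_rfl, ∅, by simp, by simp⟩⟩
  | succ r ih =>
    obtain ⟨N, hN⟩ := ih
    obtain ⟨M, hM⟩ := vdw_finitary (Fin (N + 1) → Fin c) (2 * N)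
    refine ⟨N + M + M ^ 2, fun f => ?_⟩
    obtain ⟨b, D, hD, hDM, hb, hC⟩ := hM (fun x t => f (t + x))
    rcases hN (fun t => f (t + (b + 2 * N * D))) with
      ⟨a, d, ha, hd, had, h⟩ | ⟨a, ha, haN, s, hs, h⟩
    · left
      refine ⟨a + (b + 2 * N * D), d, by omega, hd, by nlinarith, ?_⟩
      rw [h]; congr 1; ring
    · by_cases hmem : f (a + (b + 2 * N * D)) ∈ s
      · left
        obtain ⟨p, d, hp, hd, hpd, hf⟩ := h _ hmem
        refine ⟨p + (b + 2 * N * D), d, by omega, hd, by nlinarith, ?_⟩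
        rw [hf, ← hpd]; congr 1; ring
      · right
        have hDD : D ^ 2 ≤ M ^ 2 := Nat.pow_le_pow_left hDM 2
        refine ⟨a + (b + 2 * N * D) + D ^ 2, by omega, by omega,
          insert (f (a + (b + 2 * N * D))) s, by rw [Finset.card_insert_of_notMem hmem, hs], ?_⟩
        intro k hk
        rcases Finset.mem_insert.1 hk with rfl | hk
        · exact ⟨_, D, by omega, hD, rfl, rfl⟩
        · obtain ⟨p, d, hp, hd, hpd, hf⟩ := h k hk
          have hdN : d ≤ N := by nlinarith
          obtain ⟨e, he⟩ := Nat.exists_eq_add_of_le hdN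
          have hcol := congrFun (hC (2 * e) (by omega)) ⟨p, by nlinarith⟩
          refine ⟨p + (b + 2 * e * D), D + d, by omega, by omega, ?_, hcol.trans hf⟩
          rw [← hpd, he]; ring

/-- Corollary 4.1 (van der Square numbers): for every positive `c` there is an `n > c`
such that every `c`-coloring of `[n]` contains two same-colored integers a
perfect square apart. -/
theorem vanDerSquare_exists (c : ℕ) (hc : 1 ≤ c) :
    ∃ n : ℕ, c < n ∧ ∀ f : ℕ → Fin c,
      ∃ a d : ℕ, 1 ≤ a ∧ 1 ≤ d ∧ a + d ^ 2 ≤ n ∧ f a = f (a + d ^ 2) := by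
  obtain ⟨N, hN⟩ := focus c (c + 1)
  refine ⟨N + c + 1, by omega, fun f => ?_⟩
  rcases hN f with ⟨a, d, ha, hd, had, h⟩ | ⟨a, ha, haN, s, hs, h⟩
  · exact ⟨a, d, ha, hd, by omega, h⟩
  · have := Finset.card_le_univ s
    rw [Fintype.card_fin] at this
    omega
end

section
/- For every positive integer c there exists a positive integer n with n > c such that every c-coloring f of [n] = {1,...,n} contains two integers of the same color that are a perfect cube apart; that is, there exist a ∈ [n] and a positive integer d with a + d³ ≤ n and f(a) = f(a + d³). -/
/-- Finitary polynomial-van-der-Waerden property for a family of functions. -/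
def PVdW (P : Set (ℤ → ℤ)) : Prop :=
  ∀ (κ : Type) [Finite κ], ∃ N : ℤ, ∀ f : ℤ → κ, ∃ a d : ℤ,
    |a| ≤ N ∧ 0 < d ∧ d ≤ N ∧ ∀ p ∈ P, f (a + p d) = f a

/-- The derived family. -/
def derivedFam (P : Set (ℤ → ℤ)) (p₁ : ℤ → ℤ) (N : ℤ) : Set (ℤ → ℤ) :=
  {q | ∃ p ∈ P, ∃ h : ℤ, 0 ≤ h ∧ h ≤ N ∧ q = fun x => p (x + h) - p h - p₁ x}

lemma exists_bound_fam (P : Set (ℤ → ℤ)) (hP : P.Finite) (N : ℤ) :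
    ∃ M : ℤ, ∀ p ∈ P, ∀ d : ℤ, 0 ≤ d → d ≤ N → |p d| ≤ M := by
  have hfin : (Set.image2 (fun (p : ℤ → ℤ) (d : ℤ) => |p d|) P (Set.Icc 0 N)).Finite :=
    hP.image2 _ (Set.finite_Icc 0 N)
  obtain ⟨M, hM⟩ := hfin.bddAbove
  exact ⟨M, fun p hp d h0 h1 => hM ⟨p, hp, d, ⟨h0, h1⟩, rfl⟩⟩

lemma focus_step (P : Set (ℤ → ℤ)) (hP : P.Finite) (hP0 : ∀ p ∈ P, p 0 = 0)
    (p₁ : ℤ → ℤ) (hQ : ∀ N, PVdW (derivedFam P p₁ N))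
    (κ : Type) [Finite κ] (r : ℕ) :
    ∃ N : ℤ, ∀ f : ℤ → κ,
      (∃ a d : ℤ, |a| ≤ N ∧ 0 < d ∧ d ≤ N ∧ ∀ p ∈ P, f (a + p d) = f a) ∨
      (∃ a : ℤ, |a| ≤ N ∧ ∃ C : Finset κ, C.card = r ∧ ∀ c ∈ C, ∃ d : ℤ, 0 < d ∧ d ≤ N ∧
        ∀ p ∈ P, f (a + p d) = c) := by
  classical
  induction r with
  | zero =>
    exact ⟨0, fun f => Or.inr ⟨0, by simp, ∅, by simp, by simp⟩⟩
  | succ r ih =>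
    obtain ⟨N, hN⟩ := ih
    obtain ⟨M₀, hM₀⟩ := exists_bound_fam P hP N
    set M : ℤ := |N| + |M₀| with hM
    obtain ⟨N', hN'⟩ := hQ |N| (Set.Icc (-M) M → κ)
    obtain ⟨M₁, hM₁⟩ := exists_bound_fam {p₁} (Set.finite_singleton _) N'
    refine ⟨|N| + |N'| + |M₁|, fun f => ?_⟩
    obtain ⟨b, e, hb, he, heN, hbe⟩ := hN' (fun b t => f (b + t))
    have key : ∀ p ∈ P, ∀ h : ℤ, 0 ≤ h → h ≤ |N| → ∀ t : ℤ, |t| ≤ M →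
        f (b + (p (e + h) - p h - p₁ e) + t) = f (b + t) := by
      intro p hp h h0 h1 t ht
      have := hbe _ ⟨p, hp, h, h0, h1, rfl⟩
      exact congrFun this ⟨t, abs_le.mp ht⟩
    have hp1 : |p₁ e| ≤ M₁ := hM₁ p₁ rfl e he.le heN
    have l1 := le_abs_self N
    have l2 := le_abs_self N'
    have l3 := le_abs_self M₁
    have l4 := le_abs_self M₀
    have n1 := abs_nonneg N
    have n2 := abs_nonneg N'
    have n3 := abs_nonneg M₁
    have n4 := abs_nonneg M₀
    rcases hN (fun t => f (b + t)) with ⟨a, d, ha, hd, hdN, h⟩ | ⟨a, ha, C, hC, h⟩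
    · left
      refine ⟨b + a, d, ?_, hd, by linarith, fun p hp => ?_⟩
      · have := abs_add_le b a
        linarith
      · have := h p hp
        simpa [add_assoc] using this
    · by_cases hc : f (b + a) ∈ C
      · left
        obtain ⟨d, hd, hdN, hh⟩ := h _ hc
        refine ⟨b + a, d, ?_, hd, by linarith, fun p hp => ?_⟩
        · have := abs_add_le b a
          linarith
        · have := hh p hp
          simpa [add_assoc] using this
      · right
        refine ⟨b + a - p₁ e, ?_, insert (f (b + a)) C, ?_, ?_⟩
        · have := abs_add_le b a
          have := abs_sub (b + a) (p₁ e)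
          linarith
        · rw [Finset.card_insert_of_notMem hc, hC]
        · intro c hcm
          rcases Finset.mem_insert.mp hcm with rfl | hcC
          · refine ⟨e, he, by linarith, fun p hp => ?_⟩
            have := key p hp 0 le_rfl n1 a (by linarith)
            rw [hP0 p hp, add_zero] at this
            rw [← this]
            congr 1
            ring
          · obtain ⟨d, hd, hdN, hh⟩ := h c hcC
            refine ⟨e + d, by linarith, by linarith, fun p hp => ?_⟩
            have hb1 := hM₀ p hp d hd.le hdN
            have := key p hp d hd.le (by linarith) (a + p d) (by
              have := abs_add_le a (p d)
              linarith)
            rw [← hh p hp]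
            rw [← this]
            congr 1
            ring

lemma PVdW_of_derived (P : Set (ℤ → ℤ)) (hP : P.Finite) (hP0 : ∀ p ∈ P, p 0 = 0)
    (p₁ : ℤ → ℤ) (hQ : ∀ N, PVdW (derivedFam P p₁ N)) : PVdW P := by
  intro κ _
  have := Fintype.ofFinite κ
  obtain ⟨N, hN⟩ := focus_step P hP hP0 p₁ hQ κ (Fintype.card κ + 1)
  refine ⟨N, fun f => ?_⟩
  rcases hN f with h | ⟨_, _, C, hC, _⟩
  · exact h
  · have := C.card_le_univ
    omega

/-- Quadratic family attached to coefficient pairs. -/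
def quadFam (P : Finset (ℤ × ℤ)) : Set (ℤ → ℤ) :=
  (fun (c : ℤ × ℤ) (x : ℤ) => c.1 * x ^ 2 + c.2 * x) '' (P : Set (ℤ × ℤ))

lemma PVdW_erase (P : Finset (ℤ × ℤ)) (h : PVdW (quadFam (P.erase 0))) : PVdW (quadFam P) := by
  intro κ _
  obtain ⟨N, hN⟩ := h κ
  refine ⟨N, fun f => ?_⟩
  obtain ⟨a, d, h1, h2, h3, h4⟩ := hN f
  refine ⟨a, d, h1, h2, h3, ?_⟩
  rintro _ ⟨c, hc, rfl⟩
  by_cases h0 : c = 0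
  · subst h0; simp
  · exact h4 _ ⟨c, Finset.mem_coe.mpr (Finset.mem_erase.mpr ⟨h0, hc⟩), rfl⟩

/-- Coefficients of the derived family. -/
noncomputable def derivedCoef (P : Finset (ℤ × ℤ)) (c : ℤ × ℤ) (N : ℤ) : Finset (ℤ × ℤ) :=
  (P ×ˢ Finset.Icc 0 N).image
    (fun z => (z.1.1 - c.1, z.1.2 - c.2 + 2 * z.1.1 * z.2))

lemma PVdW_mono {P Q : Set (ℤ → ℤ)} (h : P ⊆ Q) (hQ : PVdW Q) : PVdW P := by
  intro κ _
  obtain ⟨N, hN⟩ := hQ κ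
  refine ⟨N, fun f => ?_⟩
  obtain ⟨a, d, h1, h2, h3, h4⟩ := hN f
  exact ⟨a, d, h1, h2, h3, fun p hp => h4 p (h hp)⟩

lemma PVdW_quad_step (P : Finset (ℤ × ℤ)) (c : ℤ × ℤ)
    (h : ∀ N, PVdW (quadFam ((derivedCoef P c N).erase 0))) : PVdW (quadFam P) := by
  refine PVdW_of_derived _ (P.finite_toSet.image _) ?_ (fun x => c.1 * x ^ 2 + c.2 * x) ?_
  · rintro _ ⟨c, _, rfl⟩
    simp
  · intro N
    refine PVdW_mono ?_ (PVdW_erase _ (h N))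
    rintro _ ⟨_, ⟨z, hz, rfl⟩, t, h0, h1, rfl⟩
    refine ⟨(z.1 - c.1, z.2 - c.2 + 2 * z.1 * t), ?_, ?_⟩
    · simp only [derivedCoef, Finset.coe_image, Set.mem_image]
      exact ⟨(z, t), by simpa using ⟨hz, h0, h1⟩, rfl⟩
    · funext x
      simp only
      ring

lemma PVdW_quad_aux (n : ℕ) : ∀ (m : ℕ) (P : Finset (ℤ × ℤ)), (0 : ℤ × ℤ) ∉ P →
    ((P.image Prod.fst).erase 0).card ≤ n → (P.filter (fun z => z.1 = 0)).card ≤ m →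
    PVdW (quadFam P) := by
  induction n using Nat.strong_induction_on with
  | _ n ihn =>
  intro m
  induction m with
  | zero =>
    intro P h0 hn hm
    have hne : ∀ c ∈ P, c.1 ≠ 0 := by
      intro c hc h
      have : c ∈ P.filter (fun z => z.1 = 0) := Finset.mem_filter.mpr ⟨hc, h⟩
      have := Finset.card_pos.mpr ⟨c, this⟩
      omega
    rcases P.eq_empty_or_nonempty with rfl | ⟨c, hc⟩
    · intro κ _
      exact ⟨1, fun f => ⟨0, 1, by simp, by simp, by simp, by simp [quadFam]⟩⟩
    · have hcm : c.1 ∈ (P.image Prod.fst).erase 0 :=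
        Finset.mem_erase.mpr ⟨hne c hc, Finset.mem_image_of_mem _ hc⟩
      have hpos := Finset.card_pos.mpr ⟨_, hcm⟩
      refine PVdW_quad_step P c fun N => ?_
      refine ihn (n - 1) (by omega) _ _ (by simp) ?_ le_rfl
      have hsub : ((((derivedCoef P c N).erase 0).image Prod.fst).erase 0) ⊆
          (((P.image Prod.fst).erase 0).erase c.1).image (fun a => a - c.1) := by
        intro a ha
        obtain ⟨ha0, ha⟩ := Finset.mem_erase.mp ha
        obtain ⟨w, hw, rfl⟩ := Finset.mem_image.mp ha
        obtain ⟨z, hz, rfl⟩ := Finset.mem_image.mp (Finset.mem_of_mem_erase hw)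
        have hz1 := (Finset.mem_product.mp hz).1
        refine Finset.mem_image.mpr ⟨z.1.1, ?_, rfl⟩
        refine Finset.mem_erase.mpr ⟨fun h => ha0 (by simp [h]), ?_⟩
        exact Finset.mem_erase.mpr ⟨hne _ hz1, Finset.mem_image_of_mem _ hz1⟩
      have h1 := (Finset.card_le_card hsub).trans Finset.card_image_le
      rw [Finset.card_erase_of_mem hcm] at h1
      omega
  | succ m ih =>
    intro P h0 hn hm
    by_cases hex : ∃ c ∈ P, c.1 = 0
    · obtain ⟨c, hc, hc0⟩ := hex
      have hcm : c ∈ P.filter (fun z => z.1 = 0) := Finset.mem_filter.mpr ⟨hc, hc0⟩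
      refine PVdW_quad_step P c fun N => ih _ (by simp) ?_ ?_
      · refine (Finset.card_le_card ?_).trans hn
        intro a ha
        obtain ⟨ha0, ha⟩ := Finset.mem_erase.mp ha
        obtain ⟨w, hw, rfl⟩ := Finset.mem_image.mp ha
        obtain ⟨z, hz, rfl⟩ := Finset.mem_image.mp (Finset.mem_of_mem_erase hw)
        have hz1 := (Finset.mem_product.mp hz).1
        refine Finset.mem_erase.mpr ⟨ha0, Finset.mem_image.mpr ⟨z.1, hz1, ?_⟩⟩
        simp [hc0]
      · have hsub : ((derivedCoef P c N).erase 0).filter (fun z => z.1 = 0) ⊆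
            ((P.filter (fun z => z.1 = 0)).erase c).image (fun z => z - c) := by
          intro w hw
          obtain ⟨hw, hw1⟩ := Finset.mem_filter.mp hw
          obtain ⟨hw0, hw⟩ := Finset.mem_erase.mp hw
          obtain ⟨z, hz, rfl⟩ := Finset.mem_image.mp hw
          have hz1 := (Finset.mem_product.mp hz).1
          have hz0 : z.1.1 = 0 := by simpa [hc0] using hw1
          have heq : z.1 - c = (z.1.1 - c.1, z.1.2 - c.2 + 2 * z.1.1 * z.2) := by
            ext <;> simp [hz0]
          refine Finset.mem_image.mpr ⟨z.1, ?_, heq⟩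
          refine Finset.mem_erase.mpr ⟨fun h => hw0 ?_, Finset.mem_filter.mpr ⟨hz1, hz0⟩⟩
          rw [← heq, h, sub_self]
        have h1 := (Finset.card_le_card hsub).trans Finset.card_image_le
        rw [Finset.card_erase_of_mem hcm] at h1
        omega
    · refine ih P h0 hn ?_
      rw [Finset.filter_eq_empty_iff.mpr fun z hz h => hex ⟨z, hz, h⟩]
      simp

theorem vanDerCube_exists (c : ℕ) (hc : 1 ≤ c) :
    ∃ n : ℕ, c < n ∧ ∀ f : ℕ → Fin c,
      ∃ a d : ℕ, 1 ≤ a ∧ 1 ≤ d ∧ a + d ^ 3 ≤ n ∧ f a = f (a + d ^ 3) := by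
  have hmain : PVdW {fun x : ℤ => x ^ 3} := by
    refine PVdW_of_derived _ (Set.finite_singleton _) (by simp) (fun x => x ^ 3) ?_
    intro N
    set P : Finset (ℤ × ℤ) := (Finset.Icc 0 N).image (fun h => (3 * h, 3 * h ^ 2)) with hP
    have : PVdW (quadFam P) :=
      PVdW_erase _ (PVdW_quad_aux _ _ _ (by simp) le_rfl le_rfl)
    refine PVdW_mono ?_ this
    rintro _ ⟨_, rfl, t, h0, h1, rfl⟩
    refine ⟨(3 * t, 3 * t ^ 2), ?_, ?_⟩
    · have : (3 * t, 3 * t ^ 2) ∈ P := Finset.mem_image.mpr ⟨t, by simp [h0, h1], rfl⟩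
      exact this
    · funext x
      simp only
      ring
  obtain ⟨N, hN⟩ := hmain (Fin c)
  refine ⟨(2 * |N| + 1 + |N| ^ 3).toNat + c + 1, by omega, fun f => ?_⟩
  obtain ⟨a, d, ha, hd, hdN, h⟩ := hN (fun x => f (x + |N| + 1).toNat)
  have h := h _ rfl
  have l1 := le_abs_self N
  obtain ⟨ha1, ha2⟩ := abs_le.mp ha
  have hd3 : d ^ 3 ≤ |N| ^ 3 := pow_le_pow_left₀ hd.le (by linarith) 3
  have hd0 : 0 < d ^ 3 := by positivity
  have hcast : ((d.toNat ^ 3 : ℕ) : ℤ) = d ^ 3 := by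
    rw [Nat.cast_pow, Int.toNat_of_nonneg hd.le]
  generalize |N| ^ 3 = K at *
  have e : (a + |N| + 1).toNat + d.toNat ^ 3 = (a + d ^ 3 + |N| + 1).toNat := by
    omega
  refine ⟨(a + |N| + 1).toNat, d.toNat, by omega, by omega, by omega, ?_⟩
  rw [e]
  exact h.symm
end

section
/- For every 3-coloring f of [68] = {1,...,68} there exist two integers of the same color that are a perfect square apart; that is, there exist a ∈ [68] and a positive integer d with a + d² ≤ 68 and f(a) = f(a + d²). -/
/-- Theorem 4.3: every 3-coloring of `[68]` contains two same-colored integers a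
perfect square apart, i.e. `R₃(VS) ≤ 68`. -/
theorem R3VS_le_68 (f : ℕ → Fin 3) :
    ∃ a d : ℕ, 1 ≤ a ∧ 1 ≤ d ∧ a + d ^ 2 ≤ 68 ∧ f a = f (a + d ^ 2) := by
  by_contra hcon
  have h : ∀ a d : ℕ, 1 ≤ a → 1 ≤ d → a + d ^ 2 ≤ 68 → f a ≠ f (a + d ^ 2) :=
    fun a d h1 h2 h3 h4 => hcon ⟨a, d, h1, h2, h3, h4⟩
  -- with three colors, two triangles sharing an edge have equally colored apexes
  have key : ∀ p q r s : Fin 3, p ≠ s → p ≠ q → q ≠ s → p ≠ r → r ≠ s → q = r := by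
    decide
  have step : ∀ x, 1 ≤ x → x + 25 ≤ 68 → f (x + 9) = f (x + 16) := by
    intro x hx hx'
    exact key (f x) (f (x + 9)) (f (x + 16)) (f (x + 25))
      (h x 5 hx (by norm_num) (by omega))
      (h x 3 hx (by norm_num) (by omega))
      (h (x + 9) 4 (by omega) (by norm_num) (by omega))
      (h x 4 hx (by norm_num) (by omega))
      (h (x + 16) 3 (by omega) (by norm_num) (by omega))
  have e1 : f 10 = f 17 := step 1 (by norm_num) (by norm_num)
  have e2 : f 17 = f 24 := step 8 (by norm_num) (by norm_num)
  have e3 : f 24 = f 31 := step 15 (by norm_num) (by norm_num)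
  have e4 : f 31 = f 38 := step 22 (by norm_num) (by norm_num)
  have e5 : f 38 = f 45 := step 29 (by norm_num) (by norm_num)
  have e6 : f 45 = f 52 := step 36 (by norm_num) (by norm_num)
  have e7 : f 52 = f 59 := step 43 (by norm_num) (by norm_num)
  have hne : f 10 ≠ f 59 := h 10 7 (by norm_num) (by norm_num) (by norm_num)
  exact hne (e1.trans (e2.trans (e3.trans (e4.trans (e5.trans (e6.trans e7))))))
end

section
/- For every 3-coloring f of [29] = {1,...,29} there exist two integers of the same color that are a perfect square apart, and there exists a 3-coloring of [28] = {1,...,28} with no two same-colored integers a perfect square apart; that is, R_3(VS) = 29. -/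
/-- Color `c` can be put in front of the reversed coloring `l`. -/
def vsExt (l : List ℕ) (c : ℕ) : Bool :=
  !(Nat.beq (l.getD 0 3) c) && !(Nat.beq (l.getD 3 3) c) && !(Nat.beq (l.getD 8 3) c) &&
  !(Nat.beq (l.getD 15 3) c) && !(Nat.beq (l.getD 24 3) c)

/-- Backtracking search: can `l` be extended by `n` further colors? -/
def vsSearch : ℕ → List ℕ → Bool
  | 0, _ => true
  | n + 1, l => (vsExt l 0 && vsSearch n (0 :: l)) || (vsExt l 1 && vsSearch n (1 :: l)) ||
      (vsExt l 2 && vsSearch n (2 :: l))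

/-- The reversed list of colors of `1, ..., m`. -/
def vsPref (f : ℕ → Fin 3) : ℕ → List ℕ
  | 0 => []
  | n + 1 => (f (n + 1)).val :: vsPref f n

theorem vsPref_getD (f : ℕ → Fin 3) (m j : ℕ) :
    (vsPref f m).getD j 3 = if j < m then (f (m - j)).val else 3 := by
  induction m generalizing j with
  | zero => simp [vsPref]
  | succ m ih =>
    cases j with
    | zero => simp [vsPref]
    | succ j => simpa [vsPref] using ih j

theorem vsExt_pref (f : ℕ → Fin 3)
    (hf : ∀ a d : ℕ, 1 ≤ a → 1 ≤ d → a + d ^ 2 ≤ 29 → f a ≠ f (a + d ^ 2))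
    (m : ℕ) (hm : m + 1 ≤ 29) : vsExt (vsPref f m) (f (m + 1)).val = true := by
  have key : ∀ j d : ℕ, j + 1 = d ^ 2 → 1 ≤ d →
      Nat.beq ((vsPref f m).getD j 3) (f (m + 1)).val = false := by
    intro j d hj hd
    rw [vsPref_getD]
    have h3 := (f (m + 1)).isLt
    rw [← Bool.not_eq_true, Nat.beq_eq]
    split_ifs with h
    · intro he
      have h2 : m - j + d ^ 2 = m + 1 := by omega
      have := hf (m - j) d (by omega) hd (by omega)
      rw [h2] at this
      exact this (Fin.ext he)
    · omega
  unfold vsExt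
  rw [key 0 1 (by norm_num) (by norm_num), key 3 2 (by norm_num) (by norm_num),
    key 8 3 (by norm_num) (by norm_num), key 15 4 (by norm_num) (by norm_num),
    key 24 5 (by norm_num) (by norm_num)]
  rfl

theorem vsSearch_pref (f : ℕ → Fin 3)
    (hf : ∀ a d : ℕ, 1 ≤ a → 1 ≤ d → a + d ^ 2 ≤ 29 → f a ≠ f (a + d ^ 2))
    (n : ℕ) : ∀ m : ℕ, m + n ≤ 29 → vsSearch n (vsPref f m) = true := by
  induction n with
  | zero => intro m _; rfl
  | succ n ih =>
    intro m hm
    have h1 := vsExt_pref f hf m (by omega)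
    have h2 := ih (m + 1) (by omega)
    simp only [vsPref] at h2
    have h3 := (f (m + 1)).isLt
    generalize (f (m + 1)).val = c at h1 h2 h3
    simp only [vsSearch]
    interval_cases c <;> simp [h1, h2]

theorem vsSearch_29 : vsSearch 29 [] = false := by
  decide +kernel

/-- A good coloring of `1, ..., 28`. -/
def vsCol (n : ℕ) : Fin 3 :=
  ([0, 0, 1, 2, 0, 1, 0, 1, 2, 0, 1, 2, 0, 2, 0, 1, 2, 1, 2, 0, 1, 2, 1, 2, 0,
    1, 2, 0, 1] : List (Fin 3)).getD n 0

theorem vsCol_good : ∀ d : Fin 6, ∀ a : Fin 29,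
    ¬ (1 ≤ a.val ∧ 1 ≤ d.val ∧ a.val + d.val ^ 2 ≤ 28 ∧
      vsCol a.val = vsCol (a.val + d.val ^ 2)) := by
  decide +kernel

/-- `R₃(VS) = 29`: every 3-coloring of `[29]` has two same-colored integers a
perfect square apart, and some 3-coloring of `[28]` has none. -/
theorem R3VS_eq_29 :
    (∀ f : ℕ → Fin 3,
      ∃ a d : ℕ, 1 ≤ a ∧ 1 ≤ d ∧ a + d ^ 2 ≤ 29 ∧ f a = f (a + d ^ 2)) ∧
    (∃ f : ℕ → Fin 3,
      ¬ ∃ a d : ℕ, 1 ≤ a ∧ 1 ≤ d ∧ a + d ^ 2 ≤ 28 ∧ f a = f (a + d ^ 2)) := by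
  constructor
  · intro f
    by_contra hcon
    have h := vsSearch_pref f (fun a d h1 h2 h3 h4 => hcon ⟨a, d, h1, h2, h3, h4⟩) 29 0 (by norm_num)
    simp only [vsPref] at h
    rw [vsSearch_29] at h
    exact absurd h (by decide)
  · refine ⟨vsCol, ?_⟩
    rintro ⟨a, d, h1, h2, h3, h4⟩
    have hd : d < 6 := by nlinarith
    have ha : a < 29 := by omega
    exact vsCol_good ⟨d, hd⟩ ⟨a, ha⟩ ⟨h1, h2, h3, h4⟩
end

section
/- There exists a 5-coloring f of [180] = {1,...,180} with no two integers of the same color a perfect square apart; that is, there are no a ∈ [180] and positive integer d with a + d² ≤ 180 and f(a) = f(a + d²). Consequently R_5(VS) > 180. -/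
/-- A good colouring of `[180]`: the colour of `n` is the base-5 digit number `n - 1`. -/
def vsCode : ℕ :=
  421727467297946927258524235082487643041174361636253724735423457000903695977971207038673730281017734631184884397572655831695994

/-- The colour of `n`, as a natural number. -/
def vsColor (n : ℕ) : ℕ := vsCode / 5 ^ (n - 1) % 5

theorem vsColor_check :
    ∀ d < 14, ∀ a < 180, 1 ≤ a → 1 ≤ d → a + d ^ 2 ≤ 180 →
      vsColor a ≠ vsColor (a + d ^ 2) := by
  decide +kernel

/-- `R₅(VS) > 180`: there is a 5-coloring of `[180]` with no two same-colored
integers a perfect square apart. -/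
theorem R5VS_gt_180 :
    ∃ f : ℕ → Fin 5,
      ¬ ∃ a d : ℕ, 1 ≤ a ∧ 1 ≤ d ∧ a + d ^ 2 ≤ 180 ∧ f a = f (a + d ^ 2) := by
  refine ⟨fun n => ⟨vsColor n, Nat.mod_lt _ (by norm_num)⟩, ?_⟩
  rintro ⟨a, d, ha, hd, had, h⟩
  have hd14 : d < 14 := by nlinarith
  have ha180 : a < 180 := by nlinarith
  exact vsColor_check d hd14 a ha180 ha hd had (congrArg Fin.val h)
end

section
/- There exists a 3-coloring f of [521] = {1,...,521} with no two integers of the same color a perfect cube apart; that is, there are no a ∈ [521] and positive integer d with a + d³ ≤ 521 and f(a) = f(a + d³). Consequently R_3(VC) > 521. -/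
/-- The coloring, packed in base 4: the color of `i` is the `i`-th base-4 digit. -/
def vcCode : ℕ := 98951058224817585689356125781168221211496348740635930284049708998344767431492058580450449516121564314634658283056752933006416854671484444347721515467938734910986602995421413381592324425829801701276019278411726514837373235487016380843566479508279857178577280555841725726797360442586574628282035236946091864664445336

/-- The `i`-th base-4 digit of the code. -/
def vcDigit (i : ℕ) : ℕ := (vcCode / 4 ^ i) % 4

/-- The color of `i`. -/
def vcColor (i : ℕ) : Fin 3 := ⟨vcDigit i % 3, Nat.mod_lt _ (by decide)⟩

/-- Boolean check for a fixed difference `k`. -/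
def vcCheck (k : ℕ) : Bool :=
  Nat.rec true (fun i b => (Nat.beq (vcDigit (i + 1) % 3) (vcDigit (i + 1 + k) % 3)).not && b)
    (521 - k)

theorem vcCheck_rec (k n : ℕ)
    (h : (Nat.rec true (fun i b =>
      (Nat.beq (vcDigit (i + 1) % 3) (vcDigit (i + 1 + k) % 3)).not && b) n : Bool) = true) :
    ∀ i < n, vcDigit (i + 1) % 3 ≠ vcDigit (i + 1 + k) % 3 := by
  induction n with
  | zero => intro i hi; omega
  | succ m ih =>
    simp only [Bool.and_eq_true] at h
    intro i hi
    rcases Nat.lt_succ_iff_lt_or_eq.mp hi with h1 | h1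
    · exact ih h.2 i h1
    · subst h1
      intro he
      have := h.1
      rw [he] at this
      simp at this

theorem vcCheck_sound (k : ℕ) (h : vcCheck k = true) (a : ℕ) (ha : 1 ≤ a) (hk : a + k ≤ 521) :
    vcColor a ≠ vcColor (a + k) := by
  intro he
  obtain ⟨i, rfl⟩ : ∃ i, a = i + 1 := ⟨a - 1, by omega⟩
  exact vcCheck_rec k (521 - k) h i (by omega) (congrArg Fin.val he)

/-- `R₃(VC) > 521`: there is a 3-coloring of `[521]` with no two same-colored
integers a perfect cube apart. -/
theorem R3VC_gt_521 :
    ∃ f : ℕ → Fin 3,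
      ¬ ∃ a d : ℕ, 1 ≤ a ∧ 1 ≤ d ∧ a + d ^ 3 ≤ 521 ∧ f a = f (a + d ^ 3) := by
  refine ⟨vcColor, ?_⟩
  rintro ⟨a, d, ha, hd, hle, he⟩
  have hd9 : d < 9 := by
    by_contra hc
    have : 9 ^ 3 ≤ d ^ 3 := Nat.pow_le_pow_left (by omega) 3
    omega
  have hc : vcCheck (d ^ 3) = true := by
    clear he hle
    interval_cases d <;> decide +kernel
  exact vcCheck_sound _ hc a ha hle he
end

section
/- For every 2-coloring f of [9] = {1,...,9} there exist two integers of the same color that are a perfect cube apart; that is, there exist a ∈ [9] and a positive integer d with a + d³ ≤ 9 and f(a) = f(a + d³). -/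
/-- Upper-bound half of `R₂(VC) = 9`: every 2-coloring of `[9]` contains two
same-colored integers a perfect cube apart. -/
theorem R2VC_upper (f : ℕ → Fin 2) :
    ∃ a d : ℕ, 1 ≤ a ∧ 1 ≤ d ∧ a + d ^ 3 ≤ 9 ∧ f a = f (a + d ^ 3) := by
  by_contra h
  have step : ∀ a, 1 ≤ a → a ≤ 8 → f a ≠ f (a + 1) := fun a h1 h2 he =>
    h ⟨a, 1, h1, le_rfl, by omega, by simpa using he⟩
  have two : ∀ a, 1 ≤ a → a ≤ 7 → f a = f (a + 2) := fun a h1 h2 => by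
    have e1 := step a h1 (by omega)
    have e2 : f (a + 1) ≠ f (a + 2) := step (a + 1) (by omega) (by omega)
    omega
  have h19 : f 1 = f 9 :=
    (two 1 (by norm_num) (by norm_num)).trans <| (two 3 (by norm_num) (by norm_num)).trans <|
      (two 5 (by norm_num) (by norm_num)).trans (two 7 (by norm_num) (by norm_num))
  exact h ⟨1, 2, by norm_num, by norm_num, by norm_num, h19⟩
end

section
/- Let n be a positive integer and let f be a 3-coloring of the grid [n] × [n] containing no monochromatic L. Then some color occurs at least n/3 times among the diagonal points (i, i), 1 ≤ i ≤ n, and for every pair i < j of diagonal points of that common color, the point (i, j') with j' chosen so that (i, i), (i, j), (j, j) would form an L — namely the point (i, j) below the diagonal completing the L with the two diagonal points — cannot receive that color. In particular, at least (⌈n/3⌉ choose 2) points strictly below the diagonal are forbidden from that color. -/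
/-- First intermediate claim in the proof of Theorem 2.3: if a 3-coloring of the
`[n] × [n]` grid has no monochromatic `L`, then some color `k` occurs on a set `S`
of at least `n/3` diagonal points `(i, i)`, and for every pair `i < j` in `S` the
point `(i, j)` completing the `L` with `(i, i)` and `(j, j)` cannot get color `k`;
in particular at least `⌈n/3⌉ choose 2` off-diagonal points are forbidden from
color `k`. -/
theorem L_free_diagonal_pigeonhole (n : ℕ) (hn : 1 ≤ n) (f : ℕ × ℕ → Fin 3)
    (hL : ¬ ∃ i j t : ℕ, 1 ≤ i ∧ 1 ≤ j ∧ 1 ≤ t ∧ i + t ≤ n ∧ j + t ≤ n ∧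
      f (i, j) = f (i, j + t) ∧ f (i, j) = f (i + t, j + t)) :
    ∃ (k : Fin 3) (S : Finset ℕ), S ⊆ Finset.Icc 1 n ∧ n ≤ 3 * S.card ∧
      (∀ i ∈ S, f (i, i) = k) ∧
      (∀ i ∈ S, ∀ j ∈ S, i < j → f (i, j) ≠ k) ∧
      Nat.choose ((n + 2) / 3) 2 ≤
        ((S ×ˢ S).filter fun p => p.1 < p.2).card := by
  have hex : ∃ k : Fin 3, n ≤ 3 * ((Finset.Icc 1 n).filter fun i => f (i, i) = k).card := by
    by_contra! h
    have hs := Finset.card_eq_sum_card_fiberwise (s := Finset.Icc 1 n)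
      (t := (Finset.univ : Finset (Fin 3))) (f := fun i => f (i, i)) (by intro x _; simp)
    rw [Fin.sum_univ_three, Nat.card_Icc] at hs
    have h0 := h 0
    have h1 := h 1
    have h2 := h 2
    omega
  obtain ⟨k, hk⟩ := hex
  refine ⟨k, (Finset.Icc 1 n).filter fun i => f (i, i) = k, Finset.filter_subset _ _, hk,
    fun i hi => (Finset.mem_filter.1 hi).2, ?_, ?_⟩
  · intro i hi j hj hij hc
    simp only [Finset.mem_filter, Finset.mem_Icc] at hi hj
    obtain ⟨t, rfl⟩ := Nat.exists_eq_add_of_lt hij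
    rw [add_assoc] at hj hc
    exact hL ⟨i, i, t + 1, hi.1.1, hi.1.1, by omega, hj.1.2, hj.1.2,
      hi.2.trans hc.symm, hi.2.trans hj.2.symm⟩
  · generalize (Finset.Icc 1 n).filter (fun i => f (i, i) = k) = S at hk
    calc Nat.choose ((n + 2) / 3) 2 ≤ Nat.choose S.card 2 := Nat.choose_le_choose 2 (by omega)
      _ = (Finset.powersetCard 2 S).card := (Finset.card_powersetCard 2 S).symm
      _ ≤ (((S ×ˢ S).filter fun p => p.1 < p.2).image
            fun p => ({p.1, p.2} : Finset ℕ)).card := by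
          apply Finset.card_le_card
          intro u hu
          obtain ⟨hu, hc⟩ := Finset.mem_powersetCard.1 hu
          obtain ⟨x, y, hxy, rfl⟩ := Finset.card_eq_two.1 hc
          have hx : x ∈ S := hu (by simp)
          have hy : y ∈ S := hu (by simp)
          rw [Finset.mem_image]
          rcases lt_or_gt_of_ne hxy with h | h
          · exact ⟨(x, y), by simp [hx, hy, h], rfl⟩
          · exact ⟨(y, x), by simp [hx, hy, h], Finset.pair_comm _ _⟩
      _ ≤ _ := Finset.card_image_le
end
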